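/- arXiv:cs/0510017 — 2 statements merged into one kernel-verified Lean document; each statement's English description precedes it below -/
import Mathlib

section
/- In the Poissonized model with parameter λ > 0, for every k: Var(X_k(λ)) < 2^k, hence Var(X̄_k(λ)) < 2^{−k}, and by Chebyshev's inequality P(|X̄_k(λ) − E X̄_k(λ)| > 2^{−k/3}) ≤ 2^{−k/3}, which tends to 0 as k → ∞. -/
/-!
Poissonized model for partial fillup in tries (Janson–Szpankowski).

An outcome `ω : ℕ × (ℕ → ℕ → Bool)` consists of the number `ω.1 = N` of inserted
strings and a source `ω.2` of infinitely many strings, where `ω.2 i j` is the `j`-th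
bit of the `i`-th string; the inserted strings are the strings `0, …, N-1`.  Under the
Poissonized measure, `N ~ Po(λ)` is independent of the strings, and all bits are
i.i.d. with `P(bit = 1) = p`.
-/

open MeasureTheory ProbabilityTheory Real Filter

/-- The number of strings among the first `n` (encoded in `ω`) whose first `k` bits
form the word `r ∈ {0,1}^k`. -/
def prefCount (ω : ℕ → ℕ → Bool) (n k : ℕ) (r : Fin k → Bool) : ℕ :=
  ((Finset.range n).filter fun i => ∀ j : Fin k, ω i j = r j).card

/-- `X_k`: the number of words `r ∈ {0,1}^k` that are prefixes of at least two of the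
first `n` strings. -/
def fillCount (ω : ℕ → ℕ → Bool) (n k : ℕ) : ℕ :=
  (Finset.univ.filter fun r : Fin k → Bool => 2 ≤ prefCount ω n k r).card

/-- `ν` is a probability measure on `ℕ → ℕ → Bool` under which all the bits
`ω i j` are i.i.d. with `P(bit = 1) = p` (characterized by cylinder probabilities). -/
def IIDBits (p : ℝ) (ν : Measure (ℕ → ℕ → Bool)) : Prop :=
  IsProbabilityMeasure ν ∧
    ∀ (S : Finset (ℕ × ℕ)) (b : ℕ × ℕ → Bool),
      ν {ω | ∀ s ∈ S, ω s.1 s.2 = b s} =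
        ∏ s ∈ S, ENNReal.ofReal (if b s then p else 1 - p)

/-- The Poissonized model: the number of inserted strings is `Po(λ)`, independent of the
i.i.d. source `ν` of strings. -/
noncomputable def poModel (lam : NNReal) (ν : Measure (ℕ → ℕ → Bool)) :
    Measure (ℕ × (ℕ → ℕ → Bool)) :=
  (ProbabilityTheory.poissonMeasure lam).prod ν

/-- `X_k(λ)` as a random variable on the Poissonized model: the number of words
`r ∈ {0,1}^k` that are prefixes of at least two of the `N` inserted strings. -/
def fillCountPo (k : ℕ) (ω : ℕ × (ℕ → ℕ → Bool)) : ℕ :=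
  fillCount ω.2 ω.1 k

/-- `X̄_k(λ) = X_k(λ) / 2^k`. -/
noncomputable def fracFilledPo (k : ℕ) (ω : ℕ × (ℕ → ℕ → Bool)) : ℝ :=
  (fillCountPo k ω : ℝ) / 2 ^ k

/-!
Each word `r` of length `k` occurs as a prefix of `N_r` inserted strings.  Since the prefixes are
i.i.d. and their number is Poisson, the counts `N_r` are independent: the characteristic
function of `∑_{i < N} Y_i` is `exp (λ (E exp (i⟨t, Y⟩) - 1))`, and when at most one coordinate of
the vector `Y` is nonzero the exponent splits into a sum over the coordinates.  Hence `X_k` is a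
sum of `2^k` independent indicators, each of variance at most `1/4`.
-/

section Compound

variable {Ω : Type*} {mΩ : MeasurableSpace Ω} {P : Measure Ω}

lemma integral_pow_poissonMeasure (r : NNReal) (z : ℂ) :
    ∫ n, z ^ n ∂poissonMeasure r = Complex.exp (r * (z - 1)) := by
  have hexp : HasSum (fun n : ℕ ↦ (r * z) ^ n / n.factorial) (Complex.exp (r * z)) := by
    rw [Complex.exp_eq_exp_ℂ]
    exact NormedSpace.expSeries_div_hasSum_exp _
  calc ∫ n, z ^ n ∂poissonMeasure r
      = ∑' n : ℕ, Complex.exp (-r) * ((r * z) ^ n / n.factorial) := by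
        rw [integral_poissonMeasure]
        congr with n
        rw [Complex.real_smul]
        push_cast
        ring
    _ = Complex.exp (-r) * Complex.exp (r * z) := (hexp.mul_left _).tsum_eq
    _ = Complex.exp (r * (z - 1)) := by
        rw [← Complex.exp_add]
        ring_nf

lemma integral_prod_range_comp_of_iid {𝕜 α : Type*} [RCLike 𝕜] [MeasurableSpace α]
    {ξ : ℕ → Ω → α} (hindep : iIndepFun ξ P) (hident : ∀ i, IdentDistrib (ξ i) (ξ 0) P P)
    {g : α → 𝕜} (hg : Measurable g) (n : ℕ) :
    ∫ ω, ∏ i ∈ Finset.range n, g (ξ i ω) ∂P = (∫ ω, g (ξ 0 ω) ∂P) ^ n := by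
  have hindep' : iIndepFun (fun i : Fin n ↦ ξ i) P := hindep.precomp Fin.val_injective
  calc ∫ ω, ∏ i ∈ Finset.range n, g (ξ i ω) ∂P
      = ∏ i : Fin n, ∫ ω, g (ξ i ω) ∂P := by
        simp only [Finset.prod_range]
        exact hindep'.integral_fun_prod_comp (f := fun _ ↦ g)
          (fun i ↦ (hident i).aemeasurable_fst) (fun _ ↦ hg.aestronglyMeasurable)
    _ = ∏ _i : Fin n, ∫ ω, g (ξ 0 ω) ∂P :=
        Finset.prod_congr rfl fun i _ ↦ ((hident i).comp hg).integral_eq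
    _ = (∫ ω, g (ξ 0 ω) ∂P) ^ n := Fin.prod_const _ _

/-- The random sum `Y_0 + ⋯ + Y_{N-1}`, as a function of the pair `(N, ω)`.  Under the product of
a Poisson law and a measure making the `Y_i` i.i.d., it has a compound Poisson law. -/
def compoundSum {E : Type*} [AddCommMonoid E] (Y : ℕ → Ω → E) (x : ℕ × Ω) : E :=
  ∑ i ∈ Finset.range x.1, Y i x.2

lemma measurable_compoundSum {E : Type*} [AddCommMonoid E] [MeasurableSpace E] [MeasurableAdd₂ E]
    {Y : ℕ → Ω → E} (hY : ∀ i, Measurable (Y i)) : Measurable (compoundSum Y) :=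
  measurable_from_prod_countable_right fun n ↦
    Finset.measurable_fun_sum (Finset.range n) fun i _ ↦ hY i

theorem charFun_map_compoundSum {E : Type*} [NormedAddCommGroup E] [InnerProductSpace ℝ E]
    [MeasurableSpace E] [BorelSpace E] [SecondCountableTopology E] {Y : ℕ → Ω → E}
    (hY : ∀ i, Measurable (Y i)) (hindep : iIndepFun Y P)
    (hident : ∀ i, IdentDistrib (Y i) (Y 0) P P) (r : NNReal) (t : E) :
    charFun (((poissonMeasure r).prod P).map (compoundSum Y)) t =
      Complex.exp (r * (charFun (P.map (Y 0)) t - 1)) := by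
  have := hindep.isProbabilityMeasure
  have hS : Measurable (compoundSum Y) := measurable_compoundSum hY
  let e (y : E) : ℂ := Complex.exp (inner ℝ y t * Complex.I)
  have he : Measurable e := by fun_prop
  have he_sum (n : ℕ) (ω : Ω) :
      e (compoundSum Y (n, ω)) = ∏ i ∈ Finset.range n, e (Y i ω) := by
    simp only [e, compoundSum, sum_inner, Complex.ofReal_sum, Finset.sum_mul, Complex.exp_sum]
  have hint : Integrable (fun x ↦ e (compoundSum Y x)) ((poissonMeasure r).prod P) :=
    .of_bound (he.comp hS).aestronglyMeasurable 1
      (ae_of_all _ fun x ↦ (Complex.norm_exp_ofReal_mul_I _).le)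
  calc charFun (((poissonMeasure r).prod P).map (compoundSum Y)) t
      = ∫ n, ∫ ω, ∏ i ∈ Finset.range n, e (Y i ω) ∂P ∂poissonMeasure r := by
        rw [charFun_apply, integral_map hS.aemeasurable he.aestronglyMeasurable,
          integral_prod _ hint]
        simp only [he_sum]
    _ = ∫ n, (charFun (P.map (Y 0)) t) ^ n ∂poissonMeasure r := by
        simp only [integral_prod_range_comp_of_iid hindep hident he]
        rw [charFun_apply, integral_map (hY 0).aemeasurable he.aestronglyMeasurable]
    _ = Complex.exp (r * (charFun (P.map (Y 0)) t - 1)) := integral_pow_poissonMeasure r _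

lemma apply_sum_of_pairwise_eq_zero_or {ι M N : Type*} [Fintype ι] [AddCommMonoid M]
    [AddCommMonoid N] {φ : M → N} (hφ : φ 0 = 0) {z : ι → M}
    (hz : Pairwise fun a b ↦ z a = 0 ∨ z b = 0) : φ (∑ a, z a) = ∑ a, φ (z a) := by
  by_cases h : ∃ a, z a ≠ 0
  · obtain ⟨a, ha⟩ := h
    have hz' (b : ι) (hb : b ≠ a) : z b = 0 := (hz hb).resolve_right ha
    rw [Fintype.sum_eq_single a hz', Fintype.sum_eq_single a fun b hb ↦ by rw [hz' b hb, hφ]]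
  · push Not at h
    simp [h, hφ]

lemma integrable_exp_inner_mul_I_sub_one {E : Type*} [NormedAddCommGroup E]
    [InnerProductSpace ℝ E] [MeasurableSpace E] [BorelSpace E] [SecondCountableTopology E]
    [IsFiniteMeasure P] {Y : Ω → E} (hY : Measurable Y) (t : E) :
    Integrable (fun ω ↦ Complex.exp (inner ℝ (Y ω) t * Complex.I) - 1) P :=
  .sub (.of_bound (by fun_prop) 1 (ae_of_all _ fun _ ↦ (Complex.norm_exp_ofReal_mul_I _).le))
    (integrable_const 1)

lemma charFun_map_sub_one {E : Type*} [NormedAddCommGroup E] [InnerProductSpace ℝ E]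
    [MeasurableSpace E] [BorelSpace E] [SecondCountableTopology E] [IsProbabilityMeasure P]
    {Y : Ω → E} (hY : Measurable Y) (t : E) :
    charFun (P.map Y) t - 1 = ∫ ω, (Complex.exp (inner ℝ (Y ω) t * Complex.I) - 1) ∂P := by
  have hint := (integrable_exp_inner_mul_I_sub_one (P := P) hY t).add (integrable_const 1)
  simp only [Pi.add_def, sub_add_cancel] at hint
  rw [integral_sub hint (integrable_const 1), integral_const, probReal_univ, one_smul,
    charFun_apply, integral_map hY.aemeasurable (by fun_prop)]

lemma charFun_map_toLp_sub_one_of_pairwise_eq_zero_or {ι : Type*} [Fintype ι]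
    [IsProbabilityMeasure P] {Z : ι → Ω → ℝ} (hZ : ∀ a, Measurable (Z a))
    (hdisj : ∀ ω, Pairwise fun a b ↦ Z a ω = 0 ∨ Z b ω = 0) (t : EuclideanSpace ℝ ι) :
    charFun (P.map fun ω ↦ WithLp.toLp 2 (Z · ω)) t - 1 =
      ∑ a, (charFun (P.map (Z a)) (t a) - 1) := by
  have hsplit (ω : Ω) : Complex.exp (inner ℝ (WithLp.toLp 2 (Z · ω)) t * Complex.I) - 1 =
      ∑ a, (Complex.exp (inner ℝ (Z a ω) (t a) * Complex.I) - 1) := by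
    rw [PiLp.inner_apply, Complex.ofReal_sum, Finset.sum_mul]
    refine apply_sum_of_pairwise_eq_zero_or (φ := fun z ↦ Complex.exp z - 1) (by simp) ?_
    exact fun a b hab ↦ (hdisj ω hab).imp (by simp +contextual) (by simp +contextual)
  rw [charFun_map_sub_one (by fun_prop)]
  simp only [hsplit, charFun_map_sub_one (hZ _)]
  exact integral_finsetSum _ fun a _ ↦ integrable_exp_inner_mul_I_sub_one (hZ a) (t a)

theorem iIndepFun_compoundSum_of_disjoint_support {ι α : Type*} [MeasurableSpace α]
    {ξ : ℕ → Ω → α} (hξ : ∀ i, Measurable (ξ i)) (hindep : iIndepFun ξ P)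
    (hident : ∀ i, IdentDistrib (ξ i) (ξ 0) P P) {f : ι → α → ℝ} (hf : ∀ a, Measurable (f a))
    (hdisj : Pairwise fun a b ↦ Disjoint (Function.support (f a)) (Function.support (f b)))
    (r : NNReal) :
    iIndepFun (fun a ↦ compoundSum fun i ω ↦ f a (ξ i ω)) ((poissonMeasure r).prod P) := by
  have := hindep.isProbabilityMeasure
  refine iIndepFun_iff_finset.2 fun S ↦ ?_
  let F (y : α) : EuclideanSpace ℝ S := WithLp.toLp 2 fun a ↦ f a y
  have hF : Measurable F := by fun_prop
  have hF_sum : (fun x ↦ WithLp.toLp 2 fun a : S ↦ compoundSum (fun i ω ↦ f a (ξ i ω)) x) =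
      compoundSum fun i ω ↦ F (ξ i ω) := by
    ext x a
    simp [compoundSum, F]
  have hzero (y : α) : Pairwise fun a b : S ↦ f a y = 0 ∨ f b y = 0 := fun a b hab ↦
    or_iff_not_imp_left.2 fun ha ↦ Function.notMem_support.1
      (Set.disjoint_left.1 (hdisj (Subtype.val_injective.ne hab)) ha)
  have hcoord (a : S) (u : ℝ) := charFun_map_compoundSum (fun i ↦ (hf a).comp (hξ i))
    (hindep.comp _ fun _ ↦ hf a) (fun i ↦ (hident i).comp (hf a)) r u
  have hvec (t : EuclideanSpace ℝ S) := charFun_map_compoundSum (fun i ↦ hF.comp (hξ i))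
    (hindep.comp _ fun _ ↦ hF) (fun i ↦ (hident i).comp hF) r t
  have hmeas (a : S) : Measurable (compoundSum fun i ω ↦ f a (ξ i ω)) :=
    measurable_compoundSum fun i ↦ (hf a).comp (hξ i)
  refine (iIndepFun_iff_charFun_pi fun a ↦ (hmeas a).aemeasurable).2 fun t ↦ ?_
  have hsplit := charFun_map_toLp_sub_one_of_pairwise_eq_zero_or (P := P)
    (fun a : S ↦ (hf a).comp (hξ 0)) (fun ω ↦ hzero (ξ 0 ω)) t
  simp only [Function.comp_def] at hcoord hvec hsplit
  simp only [hF_sum, hvec, hcoord]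
  simp only [F, hsplit, Finset.mul_sum, Complex.exp_sum]

end Compound

section Variance

variable {Ω : Type*} {mΩ : MeasurableSpace Ω} {P : Measure Ω} [IsProbabilityMeasure P]

lemma variance_sum_le_card_mul_of_mem_Icc {ι : Type*} {s : Finset ι} {X : ι → Ω → ℝ} {a b : ℝ}
    (hX : ∀ i ∈ s, AEMeasurable (X i) P) (hbound : ∀ i ∈ s, ∀ᵐ ω ∂P, X i ω ∈ Set.Icc a b)
    (hindep : Set.Pairwise ↑s fun i j ↦ IndepFun (X i) (X j) P) :
    variance (∑ i ∈ s, X i) P ≤ s.card * ((b - a) / 2) ^ 2 := by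
  have hL2 (i) (hi : i ∈ s) : MemLp (X i) 2 P :=
    memLp_of_bounded (hbound i hi) (hX i hi).aestronglyMeasurable 2
  rw [IndepFun.variance_sum hL2 hindep, ← nsmul_eq_mul]
  exact Finset.sum_le_card_nsmul _ _ _ fun i hi ↦ variance_le_sq_of_bounded (hbound i hi) (hX i hi)

lemma measure_lt_abs_sub_integral_le_of_variance_le_pow_three {X : Ω → ℝ} (hX : MemLp X 2 P)
    {c : ℝ} (hc : 0 < c) (hvar : variance X P ≤ c ^ 3) :
    P {ω | c < |X ω - ∫ ω', X ω' ∂P|} ≤ ENNReal.ofReal c :=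
  calc P {ω | c < |X ω - ∫ ω', X ω' ∂P|}
      ≤ P {ω | c ≤ |X ω - ∫ ω', X ω' ∂P|} :=
        measure_mono (Set.ofPred_subset_ofPred.2 fun _ ↦ le_of_lt)
    _ ≤ ENNReal.ofReal (variance X P / c ^ 2) := meas_ge_le_variance_div_sq hX hc
    _ ≤ ENNReal.ofReal c := by
        refine ENNReal.ofReal_le_ofReal ((div_le_iff₀ (by positivity)).2 (hvar.trans_eq ?_))
        ring

end Variance

section IID

lemma iIndepFun_of_measure_forall_eq_eq_prod {Ω ι β : Type*} {mΩ : MeasurableSpace Ω}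
    {P : Measure Ω} [IsProbabilityMeasure P] [Countable β] [MeasurableSpace β]
    [MeasurableSingletonClass β] {X : ι → Ω → β} (hX : ∀ i, Measurable (X i))
    (hprod : ∀ (S : Finset ι) (b : ι → β),
      P {ω | ∀ i ∈ S, X i ω = b i} = ∏ i ∈ S, P {ω | X i ω = b i}) :
    iIndepFun X P := by
  classical
  obtain ⟨ω₀⟩ : Nonempty Ω := nonempty_of_isProbabilityMeasure P
  refine iIndepFun_iff_finset.2 fun S ↦ ?_
  rw [iIndepFun_iff_map_fun_eq_pi_map (f := S.restrict X) fun i ↦ (hX i).aemeasurable]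
  refine Measure.ext_of_singleton fun w ↦ ?_
  let b (i : ι) : β := if hi : i ∈ S then w ⟨i, hi⟩ else X i ω₀
  have hb (i : S) : b i = w i := dif_pos i.2
  have hmeas : Measurable fun ω i ↦ S.restrict X i ω := measurable_pi_lambda _ fun i ↦ hX i
  calc P.map (fun ω i ↦ S.restrict X i ω) {w}
      = P {ω | ∀ i ∈ S, X i ω = b i} := by
        rw [Measure.map_apply hmeas (measurableSet_singleton w)]
        congr 1
        ext ω
        simp [funext_iff, ← hb]
    _ = ∏ i : S, P {ω | X i ω = w i} := by
        rw [hprod, ← Finset.prod_coe_sort]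
        simp only [hb]
    _ = Measure.pi (fun i ↦ P.map (S.restrict X i)) {w} := by
        rw [Measure.pi_singleton]
        exact Finset.prod_congr rfl fun i _ ↦
          (Measure.map_apply (hX i) (measurableSet_singleton (w i))).symm

namespace IIDBits

variable {p : ℝ} {ν : Measure (ℕ → ℕ → Bool)}

lemma iIndepFun_bit (hν : IIDBits p ν) : iIndepFun (fun (s : ℕ × ℕ) ω ↦ ω s.1 s.2) ν := by
  have := hν.1
  refine iIndepFun_of_measure_forall_eq_eq_prod (by fun_prop) fun S b ↦ ?_
  rw [hν.2]
  exact Finset.prod_congr rfl fun s _ ↦ by simpa using (hν.2 {s} b).symm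

lemma map_bit_eq (hν : IIDBits p ν) (i j : ℕ) :
    ν.map (fun ω ↦ ω i j) = ν.map (fun ω ↦ ω 0 0) := by
  refine Measure.ext_of_singleton fun b ↦ ?_
  have hbit (i j : ℕ) : ν {ω | ω i j = b} = ENNReal.ofReal (if b then p else 1 - p) := by
    simpa using hν.2 {(i, j)} fun _ ↦ b
  rw [Measure.map_apply (by fun_prop) (measurableSet_singleton b),
    Measure.map_apply (by fun_prop) (measurableSet_singleton b)]
  exact (hbit i j).trans (hbit 0 0).symm

lemma exists_eq_infinitePi (hν : IIDBits p ν) :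
    ∃ μ : Measure (ℕ → Bool), IsProbabilityMeasure μ ∧ ν = Measure.infinitePi fun _ ↦ μ := by
  have := hν.1
  let β : Measure Bool := ν.map fun ω ↦ ω 0 0
  have : IsProbabilityMeasure β :=
    Measure.isProbabilityMeasure_map (Measurable.aemeasurable (by fun_prop))
  have hbits : ν.map (fun ω (s : ℕ × ℕ) ↦ ω s.1 s.2) = Measure.infinitePi fun _ ↦ β := by
    rw [hν.iIndepFun_bit.map_fun_eq_infinitePi_map (by fun_prop)]
    simp only [hν.map_bit_eq, β]
  refine ⟨Measure.infinitePi fun _ ↦ β, inferInstance, ?_⟩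
  rw [← Measure.infinitePi_map_curry, ← hbits, Measure.map_map (by fun_prop) (by fun_prop)]
  exact Measure.map_id.symm

lemma iIndepFun_string (hν : IIDBits p ν) : iIndepFun (fun i ω ↦ ω i) ν := by
  obtain ⟨μ, _, rfl⟩ := hν.exists_eq_infinitePi
  exact iIndepFun_infinitePi (X := fun _ ↦ id) fun _ ↦ measurable_id

lemma identDistrib_string (hν : IIDBits p ν) (i : ℕ) :
    IdentDistrib (fun ω ↦ ω i) (fun ω ↦ ω 0) ν ν := by
  obtain ⟨μ, _, rfl⟩ := hν.exists_eq_infinitePi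
  refine ⟨Measurable.aemeasurable (by fun_prop), Measurable.aemeasurable (by fun_prop), ?_⟩
  rw [Measure.infinitePi_map_eval, Measure.infinitePi_map_eval]

end IIDBits

end IID

section Fill

/-- The set of infinite strings having the word `r` as a prefix. -/
def wordCylinder {k : ℕ} (r : Fin k → Bool) : Set (ℕ → Bool) :=
  {s | ∀ j : Fin k, s j = r j}

lemma measurableSet_wordCylinder {k : ℕ} (r : Fin k → Bool) : MeasurableSet (wordCylinder r) := by
  unfold wordCylinder
  measurability

lemma disjoint_wordCylinder {k : ℕ} {r s : Fin k → Bool} (hrs : r ≠ s) :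
    Disjoint (wordCylinder r) (wordCylinder s) :=
  Set.disjoint_left.2 fun _ hr hs ↦ hrs (funext fun j ↦ (hr j).symm.trans (hs j))

lemma prefCount_eq_compoundSum {k : ℕ} (r : Fin k → Bool) (x : ℕ × (ℕ → ℕ → Bool)) :
    (prefCount x.2 x.1 k r : ℝ) =
      compoundSum (fun i ω ↦ (wordCylinder r).indicator 1 (ω i)) x := by
  simp [prefCount, compoundSum, wordCylinder, Set.indicator_apply]

lemma measurable_prefCount {k : ℕ} (r : Fin k → Bool) :
    Measurable fun x : ℕ × (ℕ → ℕ → Bool) ↦ (prefCount x.2 x.1 k r : ℝ) := by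
  simp only [prefCount_eq_compoundSum]
  exact measurable_compoundSum fun i ↦
    (measurable_one.indicator (measurableSet_wordCylinder r)).comp (measurable_pi_apply i)

/-- The indicator of the event that `r` is a prefix of at least two of the inserted strings,
written as a function of the real-valued prefix count. -/
noncomputable def fillIndicator {k : ℕ} (r : Fin k → Bool) (x : ℕ × (ℕ → ℕ → Bool)) : ℝ :=
  (Set.Ici (2 : ℝ)).indicator 1 (prefCount x.2 x.1 k r : ℝ)

lemma measurable_fillIndicator {k : ℕ} (r : Fin k → Bool) : Measurable (fillIndicator r) :=
  (measurable_one.indicator measurableSet_Ici).comp (measurable_prefCount r)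

lemma fillIndicator_mem_Icc {k : ℕ} (r : Fin k → Bool) (x : ℕ × (ℕ → ℕ → Bool)) :
    fillIndicator r x ∈ Set.Icc 0 1 :=
  ⟨Set.indicator_nonneg (by simp) _, Set.indicator_le_self' (by simp) _⟩

lemma fillCountPo_eq_sum_fillIndicator (k : ℕ) :
    (fun x ↦ (fillCountPo k x : ℝ)) = ∑ r : Fin k → Bool, fillIndicator r := by
  ext x
  simp [fillCountPo, fillCount, fillIndicator, Set.indicator_apply]

instance isProbabilityMeasure_poModel (lam : NNReal) (ν : Measure (ℕ → ℕ → Bool))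
    [IsProbabilityMeasure ν] :
    IsProbabilityMeasure (poModel lam ν) := by
  unfold poModel
  infer_instance

variable {ν : Measure (ℕ → ℕ → Bool)}

lemma memLp_fracFilledPo [IsProbabilityMeasure ν] (lam : NNReal) (k : ℕ) (q : ENNReal) :
    MemLp (fracFilledPo k) q (poModel lam ν) := by
  have hX : MemLp (fun x ↦ (fillCountPo k x : ℝ)) q (poModel lam ν) := by
    rw [fillCountPo_eq_sum_fillIndicator]
    exact memLp_finsetSum' _ fun r _ ↦ memLp_of_bounded (ae_of_all _ (fillIndicator_mem_Icc r))
      (measurable_fillIndicator r).aestronglyMeasurable q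
  unfold fracFilledPo
  simp only [div_eq_mul_inv]
  exact hX.mul_const _

lemma variance_fracFilledPo (k : ℕ) (μ : Measure (ℕ × (ℕ → ℕ → Bool))) :
    variance (fracFilledPo k) μ = variance (fun x ↦ (fillCountPo k x : ℝ)) μ / (2 ^ k) ^ 2 := by
  unfold fracFilledPo
  simp only [div_eq_mul_inv, variance_mul_const, inv_pow]

lemma iIndepFun_fillIndicator (hindep : iIndepFun (fun i ω ↦ ω i) ν)
    (hident : ∀ i, IdentDistrib (fun ω ↦ ω i) (fun ω ↦ ω 0) ν ν) (lam : NNReal) (k : ℕ) :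
    iIndepFun (fun r : Fin k → Bool ↦ fillIndicator r) (poModel lam ν) := by
  have hcount : iIndepFun (fun (r : Fin k → Bool) x ↦ (prefCount x.2 x.1 k r : ℝ))
      (poModel lam ν) := by
    simp only [prefCount_eq_compoundSum]
    exact iIndepFun_compoundSum_of_disjoint_support measurable_pi_apply hindep hident
      (fun r ↦ measurable_one.indicator (measurableSet_wordCylinder r))
      (fun r s hrs ↦ (disjoint_wordCylinder hrs).mono Set.support_indicator_subset
        Set.support_indicator_subset) lam
  exact hcount.comp _ fun _ ↦ measurable_one.indicator measurableSet_Ici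

theorem variance_fillCountPo_le (hindep : iIndepFun (fun i ω ↦ ω i) ν)
    (hident : ∀ i, IdentDistrib (fun ω ↦ ω i) (fun ω ↦ ω 0) ν ν) (lam : NNReal) (k : ℕ) :
    variance (fun x ↦ (fillCountPo k x : ℝ)) (poModel lam ν) ≤ 2 ^ k / 4 := by
  have := hindep.isProbabilityMeasure
  calc variance (fun x ↦ (fillCountPo k x : ℝ)) (poModel lam ν)
      = variance (∑ r : Fin k → Bool, fillIndicator r) (poModel lam ν) := by
        rw [fillCountPo_eq_sum_fillIndicator]
    _ ≤ (Finset.univ : Finset (Fin k → Bool)).card * ((1 - 0) / 2) ^ 2 :=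
        variance_sum_le_card_mul_of_mem_Icc
          (fun r _ ↦ (measurable_fillIndicator r).aemeasurable)
          (fun r _ ↦ ae_of_all _ (fillIndicator_mem_Icc r))
          fun r _ s _ hrs ↦ (iIndepFun_fillIndicator hindep hident lam k).indepFun hrs
    _ = 2 ^ k / 4 := by
        simp only [Finset.card_univ, Fintype.card_fun, Fintype.card_bool, Fintype.card_fin]
        push_cast
        ring

end Fill

lemma rpow_neg_div_pow {b : ℝ} (hb : 0 ≤ b) (k : ℕ) {n : ℕ} (hn : n ≠ 0) :
    (b ^ (-(k : ℝ) / n)) ^ n = (b ^ k)⁻¹ := by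
  rw [← rpow_mul_natCast hb, div_mul_cancel₀ _ (Nat.cast_ne_zero.2 hn), rpow_neg hb, rpow_natCast]

lemma tendsto_rpow_neg_div_atTop_nhds_zero {b c : ℝ} (hb : 1 < b) (hc : 0 < c) :
    Tendsto (fun k : ℕ ↦ b ^ (-(k : ℝ) / c)) atTop (nhds 0) :=
  (tendsto_rpow_atBot_of_base_gt_one b hb).comp
    ((tendsto_neg_atTop_atBot.comp tendsto_natCast_atTop_atTop).atBot_div_const hc)

theorem variance_fillCountPo_general (lam : NNReal) (ν : Measure (ℕ → ℕ → Bool))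
    (hindep : iIndepFun (fun i ω ↦ ω i) ν)
    (hident : ∀ i, IdentDistrib (fun ω ↦ ω i) (fun ω ↦ ω 0) ν ν) :
    (∀ k : ℕ, variance (fun ω ↦ (fillCountPo k ω : ℝ)) (poModel lam ν) < 2 ^ k) ∧
    (∀ k : ℕ, variance (fracFilledPo k) (poModel lam ν) < ((2 : ℝ) ^ k)⁻¹) ∧
    (∀ k : ℕ,
      poModel lam ν
          {ω | (2 : ℝ) ^ (-(k : ℝ) / 3) <
            |fracFilledPo k ω - ∫ ω', fracFilledPo k ω' ∂poModel lam ν|}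
        ≤ ENNReal.ofReal ((2 : ℝ) ^ (-(k : ℝ) / 3))) ∧
    Tendsto (fun k : ℕ ↦ (2 : ℝ) ^ (-(k : ℝ) / 3)) atTop (nhds 0) := by
  have := hindep.isProbabilityMeasure
  have hcount (k : ℕ) : variance (fun ω ↦ (fillCountPo k ω : ℝ)) (poModel lam ν) < 2 ^ k :=
    (variance_fillCountPo_le hindep hident lam k).trans_lt (div_lt_self (by positivity) (by simp))
  have hfrac (k : ℕ) : variance (fracFilledPo k) (poModel lam ν) < ((2 : ℝ) ^ k)⁻¹ := by
    rw [variance_fracFilledPo, div_lt_iff₀ (by positivity), sq, inv_mul_cancel_left₀ (by simp)]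
    exact hcount k
  have hcube (k : ℕ) : ((2 : ℝ) ^ (-(k : ℝ) / 3)) ^ 3 = (2 ^ k)⁻¹ := by
    exact_mod_cast rpow_neg_div_pow two_pos.le k three_ne_zero
  exact ⟨hcount, hfrac,
    fun k ↦ measure_lt_abs_sub_integral_le_of_variance_le_pow_three (memLp_fracFilledPo lam k 2)
      (by positivity) ((hfrac k).le.trans_eq (hcube k).symm),
    tendsto_rpow_neg_div_atTop_nhds_zero one_lt_two three_pos⟩

/-- In the Poissonized model: `Var(X_k(λ)) < 2^k`, hence `Var(X̄_k(λ)) < 2^{-k}`, and by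
Chebyshev's inequality `P(|X̄_k(λ) - E X̄_k(λ)| > 2^{-k/3}) ≤ 2^{-k/3} → 0` as `k → ∞`. -/
theorem variance_fillCountPo
    (p q : ℝ) (hp : 0 < p) (hp1 : p < 1) (hq : q = 1 - p)
    (lam : NNReal) (hlam : 0 < lam)
    (ν : Measure (ℕ → ℕ → Bool)) (hν : IIDBits p ν) :
    (∀ k : ℕ,
      variance (fun ω => (fillCountPo k ω : ℝ)) (poModel lam ν) < 2 ^ k) ∧
    (∀ k : ℕ,
      variance (fracFilledPo k) (poModel lam ν) < ((2 : ℝ) ^ k)⁻¹) ∧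
    (∀ k : ℕ,
      poModel lam ν
          {ω | (2 : ℝ) ^ (-(k : ℝ) / 3) <
            |fracFilledPo k ω - ∫ ω', fracFilledPo k ω' ∂poModel lam ν|}
        ≤ ENNReal.ofReal ((2 : ℝ) ^ (-(k : ℝ) / 3))) ∧
    Tendsto (fun k : ℕ => (2 : ℝ) ^ (-(k : ℝ) / 3)) atTop (nhds 0) :=
  variance_fillCountPo_general lam ν hν.iIndepFun_string hν.identDistrib_string
end

section
/- Fix p ∈ (1/2, 1). There is a constant C > 0 such that for all λ > 1 and all positive integers k, |E X̄_k(λ) − P(Bin(k, 1/2) ≥ γ)| ≤ C k^{−1/2}, where γ = (k ln(1/q) − ln λ) / ln(p/q) and Bin(k, 1/2) denotes a binomial random variable with k trials and success probability 1/2. -/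
/-!
Poissonized model for partial fillup in tries (Janson–Szpankowski).

An outcome `ω : ℕ × (ℕ → ℕ → Bool)` consists of the number `ω.1 = N` of inserted
strings and a source `ω.2` of infinitely many strings, where `ω.2 i j` is the `j`-th
bit of the `i`-th string; the inserted strings are the strings `0, …, N-1`.  Under the
Poissonized measure, `N ~ Po(λ)` is independent of the strings, and all bits are
i.i.d. with `P(bit = 1) = p`.
-/

open MeasureTheory ProbabilityTheory Real Filter

/-- The tail probability `P(Bin(k, 1/2) ≥ γ)` of a binomial random variable with `k`
trials and success probability `1/2`, at a real threshold `γ`. -/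
noncomputable def binomialHalfTail (k : ℕ) (γ : ℝ) : ℝ :=
  ∑ j ∈ Finset.range (k + 1), if γ ≤ (j : ℝ) then (k.choose j : ℝ) * ((2 : ℝ) ^ k)⁻¹ else 0

/-!
The strings with prefix `r` are a thinning of the `Po(λ)` inserted strings, so their number has law
`Po(λ P(r))`, where `P(r) = p ^ j * q ^ (k - j)` if `r` has `j` ones. Hence `E X̄_k` is the average
of `P(Po(x_j) ≥ 2)` over `j ~ Bin(k, 1/2)`, with `x_j = λ p ^ j q ^ (k - j) = (p / q) ^ (j - γ)`.
As `P(Po(x) ≥ 2)` differs from the indicator of `x ≥ 1` by at most `min x (1 / x)`, replacing it by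
the indicator of `j ≥ γ` costs at most `(q / p) ^ |j - γ|` at `j`. These errors have a bounded sum,
and every weight of `Bin(k, 1/2)` is at most `1 / √k`.
-/

open scoped Finset ENNReal NNReal Nat

section BinomialWeights

lemma centralBinom_sq_mul_le (n : ℕ) : n.centralBinom ^ 2 * (2 * n + 1) ≤ 16 ^ n := by
  induction n with
  | zero => simp
  | succ n ih =>
    have hrec := Nat.succ_mul_centralBinom_succ n
    refine le_of_mul_le_mul_left (a := (n + 1) ^ 2) ?_ (by positivity)
    calc (n + 1) ^ 2 * ((n + 1).centralBinom ^ 2 * (2 * (n + 1) + 1))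
        = ((n + 1) * (n + 1).centralBinom) ^ 2 * (2 * n + 3) := by ring
      _ = n.centralBinom ^ 2 * (2 * n + 1) * (4 * ((2 * n + 1) * (2 * n + 3))) := by
          rw [hrec]; ring
      _ ≤ 16 ^ n * (4 * (4 * (n + 1) ^ 2)) := Nat.mul_le_mul ih (by nlinarith)
      _ = (n + 1) ^ 2 * 16 ^ (n + 1) := by ring

lemma centralBinom_succ_eq_two_mul_choose (n : ℕ) :
    (n + 1).centralBinom = 2 * (2 * n + 1).choose n := by
  rw [Nat.centralBinom_eq_two_mul_choose, show 2 * (n + 1) = 2 * n + 1 + 1 by ring,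
    Nat.choose_succ_succ, Nat.choose_symm_half, ← two_mul]

lemma choose_sq_mul_succ_le (k j : ℕ) : k.choose j ^ 2 * (k + 1) ≤ 4 ^ k := by
  have hmid : k.choose j ^ 2 * (k + 1) ≤ k.choose (k / 2) ^ 2 * (k + 1) := by
    gcongr
    exact Nat.choose_le_middle j k
  refine hmid.trans ?_
  obtain ⟨n, rfl | rfl⟩ := Nat.even_or_odd' k
  · rw [Nat.mul_div_cancel_left _ two_pos, ← Nat.centralBinom_eq_two_mul_choose, pow_mul]
    exact centralBinom_sq_mul_le n
  · have hodd := centralBinom_sq_mul_le (n + 1)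
    have hpow : 4 * 4 ^ (2 * n + 1) = 16 ^ (n + 1) := by
      rw [show 16 = 4 ^ 2 by rfl, ← pow_mul]; ring
    rw [centralBinom_succ_eq_two_mul_choose] at hodd
    rw [show (2 * n + 1) / 2 = n by lia]
    nlinarith [sq_nonneg ((2 * n + 1).choose n)]

lemma choose_mul_inv_two_pow_le {k : ℕ} (hk : 1 ≤ k) (j : ℕ) :
    (k.choose j : ℝ) * (2 ^ k)⁻¹ ≤ (√k)⁻¹ := by
  have hchoose : (k.choose j : ℝ) ^ 2 * (k + 1) ≤ 4 ^ k := mod_cast choose_sq_mul_succ_le k j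
  have hsq : ((k.choose j : ℝ) * √k) ^ 2 ≤ (2 ^ k) ^ 2 := by
    rw [mul_pow, Real.sq_sqrt k.cast_nonneg, ← pow_mul, mul_comm k 2, pow_mul]
    norm_num
    nlinarith [sq_nonneg (k.choose j : ℝ)]
  have hsqrt : 0 < √(k : ℝ) := Real.sqrt_pos.2 (mod_cast hk)
  rw [← div_eq_mul_inv, div_le_iff₀ (by positivity), inv_mul_eq_div, le_div_iff₀ hsqrt]
  exact le_of_sq_le_sq hsq (by positivity)

lemma sum_prod_ite_eq_sum_choose {ι M R : Type*} [Fintype ι] [DecidableEq ι] [CommMonoid M]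
    [AddCommMonoid R] (F : M → R) (a b : M) :
    ∑ r : ι → Bool, F (∏ j, if r j then a else b) =
      ∑ j ∈ Finset.range (Fintype.card ι + 1),
        (Fintype.card ι).choose j • F (a ^ j * b ^ (Fintype.card ι - j)) := by
  have hpowerset := Finset.sum_powerset_apply_card
    (fun j => F (a ^ j * b ^ (Fintype.card ι - j))) (x := (Finset.univ : Finset ι))
  rw [Finset.card_univ, Finset.powerset_univ] at hpowerset
  rw [← hpowerset]
  refine Fintype.sum_bijective (fun r : ι → Bool => Finset.univ.filter (r ·)) ?_ _ _ fun r => ?_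
  · exact Function.bijective_iff_has_inverse.2
      ⟨fun s j => decide (j ∈ s), fun r => by simp, fun s => by simp⟩
  · rw [Finset.prod_ite, Finset.prod_const, Finset.prod_const, ← Finset.compl_filter,
      Finset.card_compl]

end BinomialWeights

section GeometricDecay

variable {L : ℝ}

lemma sum_exp_neg_mul_le_of_separated {ι : Type*} (hL : 0 < L) {s : Finset ι} {t : ι → ℝ}
    (ht : ∀ i ∈ s, 0 ≤ t i) (hsep : (s : Set ι).Pairwise fun i j => 1 ≤ |t i - t j|) :
    ∑ i ∈ s, exp (-(L * t i)) ≤ (1 - exp (-L))⁻¹ := by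
  have hfloor : Set.InjOn (fun i => ⌊t i⌋₊) s := by
    intro i hi j hj hij
    by_contra hne
    refine (hsep hi hj hne).not_gt (Int.abs_sub_lt_one_of_floor_eq_floor ?_)
    rw [← Int.natCast_floor_eq_floor (ht i hi), ← Int.natCast_floor_eq_floor (ht j hj)]
    exact congrArg _ hij
  have hlt : exp (-L) < 1 := Real.exp_lt_one_iff.2 (neg_lt_zero.2 hL)
  calc ∑ i ∈ s, exp (-(L * t i)) ≤ ∑ i ∈ s, exp (-L) ^ ⌊t i⌋₊ := by
        refine Finset.sum_le_sum fun i hi => ?_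
        rw [← Real.exp_nat_mul, mul_neg, mul_comm _ L]
        gcongr
        exact Nat.floor_le (ht i hi)
    _ = ∑ m ∈ s.image fun i => ⌊t i⌋₊, exp (-L) ^ m := (Finset.sum_image hfloor).symm
    _ ≤ ∑' m : ℕ, exp (-L) ^ m :=
        (summable_geometric_of_lt_one (exp_nonneg _) hlt).sum_le_tsum _ fun _ _ => by positivity
    _ = (1 - exp (-L))⁻¹ := tsum_geometric_of_lt_one (exp_nonneg _) hlt

lemma sum_exp_neg_mul_abs_sub_le (hL : 0 < L) (s : Finset ℕ) (γ : ℝ) :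
    ∑ j ∈ s, exp (-(L * |j - γ|)) ≤ 2 / (1 - exp (-L)) := by
  have hcast {i j : ℕ} (hij : i ≠ j) : (1 : ℝ) ≤ |(i : ℝ) - j| := by
    exact_mod_cast Int.one_le_abs (sub_ne_zero.2 (Nat.cast_injective.ne hij))
  have hright : ∑ j ∈ s with γ ≤ (j : ℕ), exp (-(L * |j - γ|)) ≤ (1 - exp (-L))⁻¹ := by
    refine sum_exp_neg_mul_le_of_separated hL (fun _ _ => abs_nonneg _) fun i hi j hj hij => ?_
    beta_reduce
    rw [abs_of_nonneg (sub_nonneg.2 (Finset.mem_filter.1 hi).2),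
      abs_of_nonneg (sub_nonneg.2 (Finset.mem_filter.1 hj).2), sub_sub_sub_cancel_right]
    exact hcast hij
  have hleft : ∑ j ∈ s with ¬ γ ≤ (j : ℕ), exp (-(L * |j - γ|)) ≤ (1 - exp (-L))⁻¹ := by
    refine sum_exp_neg_mul_le_of_separated hL (fun _ _ => abs_nonneg _) fun i hi j hj hij => ?_
    beta_reduce
    rw [abs_of_neg (sub_neg.2 (not_le.1 (Finset.mem_filter.1 hi).2)),
      abs_of_neg (sub_neg.2 (not_le.1 (Finset.mem_filter.1 hj).2)), neg_sub_neg,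
      sub_sub_sub_cancel_right]
    exact hcast hij.symm
  rw [← Finset.sum_filter_add_sum_filter_not s fun j : ℕ => γ ≤ j, div_eq_mul_inv, two_mul]
  exact add_le_add hright hleft

end GeometricDecay

section PoissonTail

lemma poissonMeasure_real_Ici_two (x : ℝ≥0) :
    (poissonMeasure x).real (Set.Ici 2) = 1 - (1 + x) * exp (-x) := by
  have hcompl : (Set.Ici 2)ᶜ = (({0, 1} : Finset ℕ) : Set ℕ) := by
    ext n; simp; lia
  rw [← compl_compl (Set.Ici 2), probReal_compl_eq_one_sub .of_discrete, hcompl,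
    ← sum_measureReal_singleton, Finset.sum_pair zero_ne_one, poissonMeasure_real_singleton,
    poissonMeasure_real_singleton]
  simp only [pow_zero, pow_one, Nat.factorial, Nat.cast_one]
  ring

lemma poissonMeasure_real_Ici_two_le (x : ℝ≥0) : (poissonMeasure x).real (Set.Ici 2) ≤ x := by
  rw [poissonMeasure_real_Ici_two]
  nlinarith [mul_nonneg x.coe_nonneg (exp_nonneg (-(x : ℝ))), Real.one_sub_le_exp_neg (x : ℝ)]

lemma one_sub_poissonMeasure_real_Ici_two_le {x : ℝ≥0} (hx : x ≠ 0) :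
    1 - (poissonMeasure x).real (Set.Ici 2) ≤ (x : ℝ)⁻¹ := by
  have hx0 : (0 : ℝ) < x := NNReal.coe_pos.2 (pos_iff_ne_zero.2 hx)
  have hcubic : 1 + (x : ℝ) + x ^ 2 / 2 + x ^ 3 / 6 ≤ exp x := by
    simpa [Finset.sum_range_succ, Nat.factorial] using Real.sum_le_exp_of_nonneg hx0.le 4
  have hquad : x * (1 + x) ≤ exp (x : ℝ) := by
    nlinarith [mul_nonneg hx0.le (sq_nonneg ((x : ℝ) - 3 / 2))]
  rw [poissonMeasure_real_Ici_two, sub_sub_cancel, Real.exp_neg, ← div_eq_mul_inv,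
    div_le_iff₀ (exp_pos _), inv_mul_eq_div, le_div_iff₀ hx0]
  linarith

lemma abs_poissonMeasure_real_Ici_two_sub_le {x : ℝ≥0} {t : ℝ} (hx : x = exp t) :
    |(poissonMeasure x).real (Set.Ici 2) - if 0 ≤ t then 1 else 0| ≤ exp (-|t|) := by
  split_ifs with ht
  · have hx0 : x ≠ 0 := by
      rw [← NNReal.coe_ne_zero, hx]
      exact exp_ne_zero t
    rw [abs_sub_comm, abs_of_nonneg (sub_nonneg.2 measureReal_le_one), abs_of_nonneg ht,
      Real.exp_neg, ← hx]
    exact one_sub_poissonMeasure_real_Ici_two_le hx0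
  · rw [sub_zero, abs_of_nonneg measureReal_nonneg, abs_of_neg (not_le.1 ht), neg_neg, ← hx]
    exact poissonMeasure_real_Ici_two_le x

lemma abs_sum_poissonMeasure_real_sub_binomialHalfTail_le {L γ : ℝ} {x : ℕ → ℝ≥0} {k : ℕ}
    (hL : 0 < L) (hk : 1 ≤ k) (hx : ∀ j ≤ k, x j = exp (L * (j - γ))) :
    |∑ j ∈ Finset.range (k + 1),
          k.choose j * (2 ^ k)⁻¹ * (poissonMeasure (x j)).real (Set.Ici 2) -
        binomialHalfTail k γ| ≤
      2 / (1 - exp (-L)) / √k := by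
  have hterm : ∀ j ∈ Finset.range (k + 1),
      |(poissonMeasure (x j)).real (Set.Ici 2) - if γ ≤ j then 1 else 0| ≤
        exp (-(L * |j - γ|)) := by
    intro j hj
    simpa only [mul_nonneg_iff_of_pos_left hL, sub_nonneg, abs_mul, abs_of_pos hL] using
      abs_poissonMeasure_real_Ici_two_sub_le (hx j (Finset.mem_range_succ_iff.1 hj))
  have htail : binomialHalfTail k γ = ∑ j ∈ Finset.range (k + 1),
      (k.choose j : ℝ) * (2 ^ k)⁻¹ * if γ ≤ j then 1 else 0 := by
    simp only [binomialHalfTail, mul_ite, mul_one, mul_zero]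
  rw [htail, ← Finset.sum_sub_distrib]
  calc |∑ j ∈ Finset.range (k + 1), _|
      ≤ ∑ j ∈ Finset.range (k + 1), (√k)⁻¹ * exp (-(L * |j - γ|)) := by
        refine (Finset.abs_sum_le_sum_abs _ _).trans (Finset.sum_le_sum fun j hj => ?_)
        rw [← mul_sub, abs_mul, abs_of_nonneg (by positivity)]
        exact mul_le_mul (choose_mul_inv_two_pow_le hk j) (hterm j hj) (abs_nonneg _)
          (by positivity)
    _ ≤ (√k)⁻¹ * (2 / (1 - exp (-L))) := by
        rw [← Finset.mul_sum]
        gcongr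
        exact sum_exp_neg_mul_abs_sub_le hL _ γ
    _ = 2 / (1 - exp (-L)) / √k := by rw [inv_mul_eq_div]

end PoissonTail

section Thinning

lemma hasSum_poisson_mul_binomial (lam θ : ℝ) (m : ℕ) :
    HasSum (fun n : ℕ => exp (-lam) * lam ^ n / n ! * (n.choose m * θ ^ m * (1 - θ) ^ (n - m)))
      (exp (-(lam * θ)) * (lam * θ) ^ m / m !) := by
  rw [← hasSum_nat_add_iff' m, Finset.sum_eq_zero fun n hn => by
    rw [Nat.choose_eq_zero_of_lt (Finset.mem_range.1 hn)]; simp, sub_zero]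
  have hexp : HasSum (fun n : ℕ => (lam * (1 - θ)) ^ n / n !) (exp (lam * (1 - θ))) := by
    rw [Real.exp_eq_exp_ℝ]
    exact NormedSpace.expSeries_div_hasSum_exp _
  convert! hexp.mul_left (exp (-lam) * (lam * θ) ^ m / m !) using 1
  · funext n
    have hfact : ((n + m).choose m : ℝ) * n ! * m ! = (n + m)! := by
      exact_mod_cast Nat.add_choose_mul_factorial_mul_factorial n m
    rw [Nat.add_sub_cancel, ← hfact, mul_pow lam (1 - θ)]
    have hchoose : ((n + m).choose m : ℝ) ≠ 0 :=
      Nat.cast_ne_zero.2 (Nat.choose_pos (Nat.le_add_left m n)).ne'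
    field_simp
    ring
  · rw [show -(lam * θ) = -lam + lam * (1 - θ) by ring, Real.exp_add]
    ring

lemma measureReal_prod_eq_integral {α Ω : Type*} [MeasurableSpace α] [MeasurableSpace Ω]
    {ρ : Measure α} {μ : Measure Ω} [IsFiniteMeasure μ] {s : Set (α × Ω)} (hs : MeasurableSet s) :
    (ρ.prod μ).real s = ∫ a, μ.real (Prod.mk a ⁻¹' s) ∂ρ := by
  rw [measureReal_def, Measure.prod_apply hs]
  exact (integral_toReal (measurable_measure_prodMk_left hs).aemeasurable
    (.of_forall fun _ => measure_lt_top _ _)).symm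

variable {ι Ω : Type*}

open Classical in
lemma filter_mem_eq_biInter {A : ι → Set Ω} {S T : Finset ι} (hTS : T ⊆ S) :
    {ω | {i ∈ S | ω ∈ A i} = T} = ⋂ i ∈ S, if i ∈ T then A i else (A i)ᶜ := by
  ext ω
  simp only [Set.mem_ofPred_eq, Finset.ext_iff, Finset.mem_filter, Set.mem_iInter]
  constructor
  · intro h i hi
    split_ifs with hiT
    · exact ((h i).2 hiT).2
    · exact fun hiA => hiT ((h i).1 ⟨hi, hiA⟩)
  · intro h i
    by_cases hi : i ∈ S
    · have hiA := h i hi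
      split_ifs at hiA with hiT
      · exact ⟨fun _ => hiT, fun _ => ⟨hi, hiA⟩⟩
      · exact ⟨fun hmem => absurd hmem.2 hiA, fun hmem => absurd hmem hiT⟩
    · exact ⟨fun hiA => absurd hiA.1 hi, fun hiT => absurd (hTS hiT) hi⟩

variable [MeasurableSpace Ω] {μ : Measure Ω} {A : ι → Set Ω} {θ : ℝ}

open Classical in
lemma measureReal_filter_mem_eq (hind : iIndepSet A μ) (hA : ∀ i, MeasurableSet (A i))
    (hθ : ∀ i, μ.real (A i) = θ) {S T : Finset ι} (hTS : T ⊆ S) :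
    μ.real {ω | {i ∈ S | ω ∈ A i} = T} = θ ^ #T * (1 - θ) ^ (#S - #T) := by
  have := hind.isProbabilityMeasure
  have hinter : μ (⋂ i ∈ S, if i ∈ T then A i else (A i)ᶜ) =
      ∏ i ∈ S, μ (if i ∈ T then A i else (A i)ᶜ) := by
    refine ((iIndepSet_iff_iIndep _ _).1 hind).meas_biInter fun i _ => ?_
    have hgen := MeasurableSpace.measurableSet_generateFrom (Set.mem_singleton (A i))
    split_ifs
    exacts [hgen, hgen.compl]
  have hfilter : S.filter (· ∈ T) = T := by
    rw [Finset.filter_mem_eq_inter, Finset.inter_eq_right.2 hTS]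
  rw [filter_mem_eq_biInter hTS, measureReal_def, hinter, ENNReal.toReal_prod]
  simp only [← measureReal_def, apply_ite μ.real, probReal_compl_eq_one_sub (hA _), hθ]
  rw [Finset.prod_ite, Finset.prod_const, Finset.prod_const, hfilter, Finset.filter_notMem_eq_sdiff,
    Finset.card_sdiff_of_subset hTS]

open Classical in
lemma measureReal_card_filter_mem_eq (hind : iIndepSet A μ) (hA : ∀ i, MeasurableSet (A i))
    (hθ : ∀ i, μ.real (A i) = θ) (S : Finset ι) (m : ℕ) :
    μ.real {ω | #{i ∈ S | ω ∈ A i} = m} = (#S).choose m * θ ^ m * (1 - θ) ^ (#S - m) := by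
  have := hind.isProbabilityMeasure
  have hunion : {ω | #{i ∈ S | ω ∈ A i} = m} =
      ⋃ T ∈ S.powersetCard m, {ω | {i ∈ S | ω ∈ A i} = T} := by
    ext ω
    simp [Finset.mem_powersetCard]
  rw [hunion, measureReal_biUnion_finset]
  · rw [Finset.sum_congr rfl fun T hT => by
      rw [measureReal_filter_mem_eq hind hA hθ (Finset.mem_powersetCard.1 hT).1,
        (Finset.mem_powersetCard.1 hT).2]]
    rw [Finset.sum_const, Finset.card_powersetCard, nsmul_eq_mul, mul_assoc]
  · exact fun T _ T' _ hne => Set.disjoint_left.2 fun ω hT hT' => hne (hT.symm.trans hT')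
  · intro T hT
    rw [filter_mem_eq_biInter (Finset.mem_powersetCard.1 hT).1]
    refine Finset.measurableSet_biInter _ fun i _ => ?_
    split_ifs
    exacts [hA i, (hA i).compl]

open Classical in
lemma measurable_card_filter_mem (hA : ∀ i, MeasurableSet (A i)) (S : Finset ι) :
    Measurable fun ω => #{i ∈ S | ω ∈ A i} := by
  simp only [Finset.card_filter]
  exact Finset.measurable_sum _ fun i _ => Measurable.ite (hA i) measurable_const measurable_const

open Classical in
theorem hasLaw_card_filter_mem_poisson {A : ℕ → Set Ω} {θ : ℝ≥0} (hind : iIndepSet A μ)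
    (hA : ∀ i, MeasurableSet (A i)) (hθ : ∀ i, μ (A i) = θ) (lam : ℝ≥0) :
    HasLaw (fun ω : ℕ × Ω => #{i ∈ Finset.range ω.1 | ω.2 ∈ A i}) (poissonMeasure (lam * θ))
      ((poissonMeasure lam).prod μ) := by
  have := hind.isProbabilityMeasure
  have hmeas : Measurable fun ω : ℕ × Ω => #{i ∈ Finset.range ω.1 | ω.2 ∈ A i} :=
    measurable_from_prod_countable_right fun n => measurable_card_filter_mem hA (Finset.range n)
  have hθ' (i : ℕ) : μ.real (A i) = θ := by simp [measureReal_def, hθ i]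
  refine ⟨hmeas.aemeasurable, ?_⟩
  have := Measure.isProbabilityMeasure_map (μ := (poissonMeasure lam).prod μ) hmeas.aemeasurable
  refine Measure.ext_of_measureReal_singleton fun m => ?_
  rw [map_measureReal_apply hmeas (measurableSet_singleton m),
    measureReal_prod_eq_integral (hmeas (measurableSet_singleton m)),
    integral_poissonMeasure, poissonMeasure_real_singleton, NNReal.coe_mul]
  refine Eq.trans (tsum_congr fun n => ?_) (hasSum_poisson_mul_binomial lam θ m).tsum_eq
  have hbinom := measureReal_card_filter_mem_eq hind hA hθ' (Finset.range n) m
  rw [Finset.card_range] at hbinom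
  rw [smul_eq_mul, ← hbinom]
  rfl

end Thinning

section Model

variable {p : ℝ} {ν : Measure (ℕ → ℕ → Bool)} {k : ℕ}

/-- The event that the `i`-th string has the word `r` as a prefix. -/
def prefixEvent (r : Fin k → Bool) (i : ℕ) : Set (ℕ → ℕ → Bool) :=
  {ω | ∀ j : Fin k, ω i j = r j}

/-- The probability `P(r)` that a random string has the word `r` as a prefix. It is `ℝ≥0`-valued so
that `λ P(r)` can be the parameter of a Poisson law. -/
noncomputable def wordProb (p : ℝ) (r : Fin k → Bool) : ℝ≥0 :=
  ∏ j, if r j then p.toNNReal else (1 - p).toNNReal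

lemma measurableSet_prefixEvent (r : Fin k → Bool) (i : ℕ) : MeasurableSet (prefixEvent r i) := by
  have hinter : prefixEvent r i = ⋂ j : Fin k, (fun ω => ω i j) ⁻¹' {r j} := by
    ext ω
    simp [prefixEvent]
  rw [hinter]
  exact .iInter fun j => (by fun_prop : Measurable fun ω : ℕ → ℕ → Bool => ω i j)
    (measurableSet_singleton (r j))

lemma measure_biInter_prefixEvent (hν : IIDBits p ν) (r : Fin k → Bool) (S : Finset ℕ) :
    ν (⋂ i ∈ S, prefixEvent r i) = (wordProb p r : ℝ≥0∞) ^ #S := by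
  let b : ℕ × ℕ → Bool := fun s => if h : s.2 < k then r ⟨s.2, h⟩ else false
  have hcylinder : ⋂ i ∈ S, prefixEvent r i = {ω | ∀ s ∈ S ×ˢ Finset.range k, ω s.1 s.2 = b s} := by
    ext ω
    simp +contextual only [prefixEvent, b, Fin.forall_iff, Set.mem_iInter, Set.mem_ofPred_eq,
      Prod.forall, Finset.mem_product, Finset.mem_range, dite_true]
    exact ⟨fun h i j hij => h i hij.1 j hij.2, fun h i hi j hj => h i j ⟨hi, hj⟩⟩
  have hstring (i : ℕ) : ∏ j ∈ Finset.range k, ENNReal.ofReal (if b (i, j) then p else 1 - p) =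
      wordProb p r := by
    rw [Finset.prod_range, wordProb, ENNReal.ofNNReal_finsetProd]
    refine Finset.prod_congr rfl fun j _ => ?_
    simp only [b, j.isLt, dite_true, Fin.eta]
    split_ifs <;> rfl
  rw [hcylinder, hν.2, Finset.prod_product, Finset.prod_congr rfl fun i _ => hstring i,
    Finset.prod_const]

lemma measure_prefixEvent (hν : IIDBits p ν) (r : Fin k → Bool) (i : ℕ) :
    ν (prefixEvent r i) = wordProb p r := by
  simpa using measure_biInter_prefixEvent hν r {i}

lemma iIndepSet_prefixEvent (hν : IIDBits p ν) (r : Fin k → Bool) :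
    iIndepSet (prefixEvent r) ν := by
  refine (iIndepSet_iff_meas_biInter (measurableSet_prefixEvent r)).2 fun S => ?_
  simp only [measure_biInter_prefixEvent hν r S, measure_prefixEvent hν r, Finset.prod_const]

lemma hasLaw_prefCount (hν : IIDBits p ν) (lam : ℝ≥0) (r : Fin k → Bool) :
    HasLaw (fun ω : ℕ × (ℕ → ℕ → Bool) => prefCount ω.2 ω.1 k r)
      (poissonMeasure (lam * wordProb p r)) (poModel lam ν) := by
  refine (hasLaw_card_filter_mem_poisson (iIndepSet_prefixEvent hν r)
    (measurableSet_prefixEvent r) (measure_prefixEvent hν r) lam).congr (.of_forall fun ω => ?_)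
  exact congrArg Finset.card (Finset.filter_congr_decidable _ _ _).symm

lemma fracFilledPo_eq_sum_indicator (ω : ℕ × (ℕ → ℕ → Bool)) :
    fracFilledPo k ω =
      (2 ^ k)⁻¹ * ∑ r : Fin k → Bool, (Set.Ici 2).indicator 1 (prefCount ω.2 ω.1 k r) := by
  simp only [fracFilledPo, fillCountPo, fillCount, Finset.card_filter, Nat.cast_sum, Nat.cast_ite,
    Nat.cast_one, Nat.cast_zero, Set.indicator_apply, Set.mem_Ici, Pi.one_apply, div_eq_inv_mul]

theorem integral_fracFilledPo (hν : IIDBits p ν) (lam : ℝ≥0) :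
    ∫ ω, fracFilledPo k ω ∂poModel lam ν =
      ∑ j ∈ Finset.range (k + 1), k.choose j * (2 ^ k)⁻¹ *
        (poissonMeasure (lam * (p.toNNReal ^ j * (1 - p).toNNReal ^ (k - j)))).real
          (Set.Ici 2) := by
  let g : ℕ → ℝ := (Set.Ici 2).indicator 1
  have hg (x : ℝ≥0) : Integrable g (poissonMeasure x) :=
    (integrable_const (1 : ℝ)).indicator measurableSet_Ici
  have hlaw (r : Fin k → Bool) := hasLaw_prefCount hν lam r
  have hword (r : Fin k → Bool) : ∫ ω, g (prefCount ω.2 ω.1 k r) ∂poModel lam ν =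
      (poissonMeasure (lam * wordProb p r)).real (Set.Ici 2) :=
    ((hlaw r).integral_comp (hg _).aestronglyMeasurable).trans
      (integral_indicator_one measurableSet_Ici)
  have hint (r : Fin k → Bool) :
      Integrable (fun ω => g (prefCount ω.2 ω.1 k r)) (poModel lam ν) := by
    refine Integrable.comp_aemeasurable (g := g) ?_ (hlaw r).aemeasurable
    rw [(hlaw r).map_eq]
    exact hg _
  simp only [fracFilledPo_eq_sum_indicator, integral_const_mul]
  rw [integral_finsetSum _ fun r _ => hint r,
    Finset.sum_congr rfl fun r _ => hword r]
  simp only [wordProb]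
  rw [sum_prod_ite_eq_sum_choose fun x => (poissonMeasure (lam * x)).real (Set.Ici 2),
    Fintype.card_fin, Finset.mul_sum]
  refine Finset.sum_congr rfl fun j _ => ?_
  rw [nsmul_eq_mul]
  ring

end Model

lemma mul_pow_mul_pow_eq_exp {p q lam : ℝ} {j k : ℕ} (hp : 0 < p) (hq : 0 < q) (hlam : 0 < lam)
    (hpq : log (p / q) ≠ 0) (hjk : j ≤ k) :
    lam * (p ^ j * q ^ (k - j)) =
      exp (log (p / q) * (j - (k * log (1 / q) - log lam) / log (p / q))) := by
  have hpos : 0 < lam * (p ^ j * q ^ (k - j)) := by positivity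
  rw [← Real.exp_log hpos, mul_sub, mul_div_cancel₀ _ hpq, Real.log_mul hlam.ne' (by positivity),
    Real.log_mul (by positivity) (by positivity), Real.log_pow, Real.log_pow, Nat.cast_sub hjk,
    Real.log_div hp.ne' hq.ne', one_div, Real.log_inv]
  ring_nf

theorem expectation_fracFilledPo_binomial_approx_general
    (p q : ℝ) (hp : 1 / 2 < p) (hp1 : p < 1) (hq : q = 1 - p)
    (ν : Measure (ℕ → ℕ → Bool)) (hν : IIDBits p ν)
    (lam : NNReal) (hlam : 0 < lam) (k : ℕ) (hk : 1 ≤ k) :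
    |(∫ ω, fracFilledPo k ω ∂poModel lam ν) -
        binomialHalfTail k
          ((k * Real.log (1 / q) - Real.log lam) / Real.log (p / q))| ≤
      2 / (1 - q / p) / Real.sqrt k := by
  have hp0 : 0 < p := by linarith
  have hq0 : 0 < q := by linarith
  have hL : 0 < log (p / q) := Real.log_pos ((one_lt_div hq0).2 (by linarith))
  have hrate : q / p = exp (-log (p / q)) := by
    rw [Real.exp_neg, Real.exp_log (div_pos hp0 hq0), inv_div]
  rw [integral_fracFilledPo hν lam, ← hq, hrate]
  refine abs_sum_poissonMeasure_real_sub_binomialHalfTail_le hL hk fun j hjk => ?_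
  refine Eq.trans ?_ (mul_pow_mul_pow_eq_exp hp0 hq0 (NNReal.coe_pos.2 hlam) hL.ne' hjk)
  simp only [NNReal.coe_mul, NNReal.coe_pow, Real.coe_toNNReal _ hp0.le, Real.coe_toNNReal _ hq0.le]

/-- For `p ∈ (1/2, 1)`: `E X̄_k(λ) = P(Bin(k, 1/2) ≥ γ) + O(k^{-1/2})` uniformly, where
`γ = (k ln(1/q) - ln λ) / ln(p/q)`. -/
theorem expectation_fracFilledPo_binomial_approx
    (p q : ℝ) (hp : 1 / 2 < p) (hp1 : p < 1) (hq : q = 1 - p)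
    (ν : Measure (ℕ → ℕ → Bool)) (hν : IIDBits p ν) :
    ∃ C > (0 : ℝ), ∀ lam : NNReal, 1 < lam → ∀ k : ℕ, 1 ≤ k →
      |(∫ ω, fracFilledPo k ω ∂poModel lam ν) -
          binomialHalfTail k
            ((k * Real.log (1 / q) - Real.log lam) / Real.log (p / q))| ≤
        C / Real.sqrt k := by
  have hqp : q / p < 1 := (div_lt_one (by linarith)).2 (by linarith)
  exact ⟨2 / (1 - q / p), div_pos two_pos (sub_pos.2 hqp), fun lam hlam k hk =>
    expectation_fracFilledPo_binomial_approx_general p q hp hp1 hq ν hν lam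
      (one_pos.trans hlam) k hk⟩
end
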